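/- Let (X,d) be a compact metric space and f: X → ℝ a Lipschitz function. Then for every (x,t) ∈ X × (0,∞) the slope of Q_t f satisfies |D Q_t f|(x) ≤ D⁺(x,t)/t. -/

import Mathlib

open Filter Topology Set MeasureTheory
open scoped ENNReal NNReal

/-- Hopf-Lax semigroup: `Q_t f (x) = inf_y ( f y + d(x,y)^2 / (2t) )`, with `Q_0 f = f`. -/
noncomputable def HL {X : Type*} [MetricSpace X] (f : X → ℝ) (t : ℝ) (x : X) : ℝ :=
  if t = 0 then f x else ⨅ y : X, (f y + dist x y ^ 2 / (2 * t))

/-- The set of minimizers of `y ↦ f y + d(x,y)^2/(2t)`. -/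
def minSet {X : Type*} [MetricSpace X] (f : X → ℝ) (t : ℝ) (x : X) : Set X :=
  {y | ∀ z : X, f y + dist x y ^ 2 / (2 * t) ≤ f z + dist x z ^ 2 / (2 * t)}

/-- `D⁺(x,t)`: the largest distance from `x` to a minimizer of `y ↦ f y + d(x,y)^2/(2t)`,
with `D⁺(x,0) = 0`. -/
noncomputable def Dplus {X : Type*} [MetricSpace X] (f : X → ℝ) (x : X) (t : ℝ) : ℝ :=
  if t = 0 then 0 else sSup (dist x '' minSet f t x)

/-- `D⁻(x,t)`: the smallest distance from `x` to a minimizer of `y ↦ f y + d(x,y)^2/(2t)`,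
with `D⁻(x,0) = 0`. -/
noncomputable def Dminus {X : Type*} [MetricSpace X] (f : X → ℝ) (x : X) (t : ℝ) : ℝ :=
  if t = 0 then 0 else sInf (dist x '' minSet f t x)

/-- The slope (local Lipschitz constant) of `u` at `x`:
`|Du|(x) = limsup_{y→x} |u y - u x| / d(y,x)` (this `Real`-valued `limsup` is `0` at isolated
points, where the punctured neighborhood filter is trivial). -/
noncomputable def locSlope {X : Type*} [MetricSpace X] (u : X → ℝ) (x : X) : ℝ :=
  limsup (fun y => |u y - u x| / dist y x) (𝓝[≠] x)

section HopfLax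

variable {X : Type*} [MetricSpace X] {f : X → ℝ} {t : ℝ}

lemma HL_eq_of_mem_minSet (ht : t ≠ 0) {x y : X} (hy : y ∈ minSet f t x) :
    HL f t x = f y + dist x y ^ 2 / (2 * t) := by
  have : Nonempty X := ⟨x⟩
  rw [HL, if_neg ht]
  exact le_antisymm (ciInf_le ⟨_, forall_mem_range.2 hy⟩ y) (le_ciInf hy)

lemma Dplus_nonneg (x : X) : 0 ≤ Dplus f x t := by
  rw [Dplus]
  split_ifs
  · exact le_rfl
  · exact Real.sSup_nonneg (forall_mem_image.2 fun _ _ => dist_nonneg)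

lemma minSet_nonempty [CompactSpace X] (hf : Continuous f) (x : X) :
    (minSet f t x).Nonempty := by
  have hc : Continuous fun y => f y + dist x y ^ 2 / (2 * t) := by fun_prop
  obtain ⟨y, -, hy⟩ := isCompact_univ.exists_isMinOn ⟨x, mem_univ x⟩ hc.continuousOn
  exact ⟨y, fun z => hy (mem_univ z)⟩

lemma dist_le_Dplus [CompactSpace X] (ht : t ≠ 0) {x y : X} (hy : y ∈ minSet f t x) :
    dist x y ≤ Dplus f x t := by
  rw [Dplus, if_neg ht]
  refine le_csSup ⟨Metric.diam (univ : Set X), forall_mem_image.2 fun z _ => ?_⟩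
    (mem_image_of_mem _ hy)
  exact Metric.dist_le_diam_of_mem isCompact_univ.isBounded (mem_univ _) (mem_univ _)

/-- Minimizers for points near `x` are not much farther from `x` than `D⁺(x,t)`. -/
lemma eventually_dist_lt_of_mem_minSet [CompactSpace X] (hf : Continuous f) (ht : t ≠ 0)
    (x : X) {r : ℝ} (hr : Dplus f x t < r) :
    ∀ᶠ y in 𝓝 x, ∀ z ∈ minSet f t y, dist x z < r := by
  have hK : IsCompact {z : X | r ≤ dist x z} :=
    (isClosed_le (by fun_prop) (by fun_prop)).isCompact
  have key : ∀ᶠ y in 𝓝 x, ∀ z ∈ {z : X | r ≤ dist x z}, z ∉ minSet f t y := by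
    refine hK.eventually_forall_of_forall_eventually fun z hz => ?_
    have hz' : z ∉ minSet f t x := fun h =>
      (hr.trans_le hz).not_ge (dist_le_Dplus ht h)
    simp only [minSet, mem_ofPred_eq, not_forall, not_le] at hz' ⊢
    obtain ⟨w, hw⟩ := hz'
    have ho : IsOpen {p : X × X |
        f w + dist p.1 w ^ 2 / (2 * t) < f p.2 + dist p.1 p.2 ^ 2 / (2 * t)} :=
      isOpen_lt (by fun_prop) (by fun_prop)
    filter_upwards [ho.mem_nhds (x := (x, z)) hw] with p hp using ⟨w, hp⟩
  filter_upwards [key] with y hy z hz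
  by_contra! h
  exact hy z h hz

/-- One-sided increment bound for `Q_t f`, in terms of a minimizer `z` for `x`. -/
lemma HL_sub_le [CompactSpace X] (hf : Continuous f) (ht : 0 < t) {x y z : X}
    (hz : z ∈ minSet f t x) :
    HL f t y - HL f t x ≤ dist y x * (dist y z + dist x z) / (2 * t) := by
  obtain ⟨w, hw⟩ := minSet_nonempty (t := t) hf y
  rw [HL_eq_of_mem_minSet ht.ne' hz, HL_eq_of_mem_minSet ht.ne' hw]
  have h : dist y z ^ 2 - dist x z ^ 2 ≤ dist y x * (dist y z + dist x z) := by
    nlinarith [dist_triangle y x z, dist_nonneg (x := y) (y := z),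
      dist_nonneg (x := x) (y := z)]
  calc f w + dist y w ^ 2 / (2 * t) - (f z + dist x z ^ 2 / (2 * t))
      ≤ f z + dist y z ^ 2 / (2 * t) - (f z + dist x z ^ 2 / (2 * t)) := by
        gcongr ?_ - _
        exact hw z
    _ = (dist y z ^ 2 - dist x z ^ 2) / (2 * t) := by ring
    _ ≤ _ := by gcongr

lemma eventually_abs_HL_sub_div_le [CompactSpace X] (hf : Continuous f) (ht : 0 < t) (x : X)
    {r : ℝ} (hr : Dplus f x t < r) :
    ∀ᶠ y in 𝓝[≠] x, |HL f t y - HL f t x| / dist y x ≤ r / t := by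
  obtain ⟨s, hs, hsr⟩ := exists_between hr
  filter_upwards [nhdsWithin_le_nhds (eventually_dist_lt_of_mem_minSet hf ht.ne' x hs),
    nhdsWithin_le_nhds (Metric.ball_mem_nhds x (sub_pos.2 hsr)), self_mem_nhdsWithin]
    with y hy hyr hne
  rw [Metric.mem_ball] at hyr
  have hbound : ∀ z, dist x z < s →
      dist y x * (dist y z + dist x z) / (2 * t) ≤ r / t * dist y x := fun z hz => by
    have h : dist y z + dist x z ≤ 2 * r := by
      linarith [dist_triangle y x z]
    calc dist y x * (dist y z + dist x z) / (2 * t)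
        ≤ dist y x * (2 * r) / (2 * t) := by gcongr
      _ = r / t * dist y x := by field_simp
  rw [div_le_iff₀ (dist_pos.2 hne), abs_sub_le_iff]
  obtain ⟨z, hz⟩ := minSet_nonempty (t := t) hf x
  obtain ⟨w, hw⟩ := minSet_nonempty (t := t) hf y
  refine ⟨(HL_sub_le hf ht hz).trans
    (hbound z ((dist_le_Dplus ht.ne' hz).trans_lt hs)), (HL_sub_le hf ht hw).trans ?_⟩
  rw [dist_comm x y, add_comm]
  exact hbound w (hy w hw)

end HopfLax

lemma locSlope_le {X : Type*} [MetricSpace X] {u : X → ℝ} {x : X} {a : ℝ} (ha : 0 ≤ a)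
    (h : ∀ᶠ y in 𝓝[≠] x, |u y - u x| / dist y x ≤ a) : locSlope u x ≤ a := by
  rw [locSlope]
  rcases (𝓝[≠] x).eq_or_neBot with hbot | hbot
  · simpa [hbot, limsup_eq] using ha
  · refine limsup_le_of_le ?_ h
    exact (isBoundedUnder_of ⟨0, fun y => by positivity⟩ :
      IsBoundedUnder (· ≥ ·) (𝓝[≠] x) _).isCoboundedUnder_le

/-- **Bound on the local Lipschitz constant of `Q_t f`** (Proposition 3.4): for every
`(x,t) ∈ X × (0,∞)`, `|D Q_t f|(x) ≤ D⁺(x,t)/t`. -/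
theorem stmt3 {X : Type*} [MetricSpace X] [CompactSpace X] [Nonempty X]
    (f : X → ℝ) (hf : ∃ K : ℝ≥0, LipschitzWith K f) :
    ∀ (x : X) (t : ℝ), 0 < t → locSlope (HL f t) x ≤ Dplus f x t / t := by
  obtain ⟨K, hK⟩ := hf
  intro x t ht
  rw [le_div_iff₀ ht]
  refine le_of_forall_gt_imp_ge_of_dense fun r hr => ?_
  rw [← le_div_iff₀ ht]
  exact locSlope_le (div_nonneg ((Dplus_nonneg x).trans hr.le) ht.le)
    (eventually_abs_HL_sub_div_le hK.continuous ht x hr)
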